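/- arXiv:1808.10185 — 7 statements merged into one kernel-verified Lean document; each statement's English description precedes it below -/
import Mathlib

section
/- There exists a maximum corroboration value θ^max ∈ ℝ such that c(θ^max) ≥ c(θ) for every θ ∈ ℝ; that is, the corroboration function attains its supremum over ℝ. -/
/-!
The function `c` is nonnegative, upper semicontinuous and tends to `0` at `±∞`. If it is not
identically zero, say `0 < c θ₀`, then `c < c θ₀` outside a compact interval, and on that interval
the upper semicontinuous function `c` attains its maximum.

Both facts are read off from cumulative distribution functions `t ↦ μ {Z ≤ t}`. The decay comes
from `c θ ≤ μ {L ≤ θ}` and `c θ ≤ μ {-U ≤ -θ}`. For upper semicontinuity at `x`, take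
`Z = max (L - x) (x - U)`, the signed distance from `x` to `[L, U]`
(nonpositive exactly when `x ∈ [L, U]`): then `c x = μ {Z ≤ 0}` and
`c θ ≤ μ {Z ≤ |θ - x|}`, so right continuity of the distribution function of `Z` at `0` suffices.
-/

open MeasureTheory Filter Set

theorem cdf_map_apply {Ω : Type*} [MeasurableSpace Ω] (μ : Measure Ω) [IsProbabilityMeasure μ]
    {Z : Ω → ℝ} (hZ : Measurable Z) (t : ℝ) :
    ProbabilityTheory.cdf (μ.map Z) t = (μ {ω | Z ω ≤ t}).toReal := by
  have : IsProbabilityMeasure (μ.map Z) := Measure.isProbabilityMeasure_map hZ.aemeasurable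
  rw [ProbabilityTheory.cdf_eq_real, Measure.real, Measure.map_apply hZ measurableSet_Iic]
  rfl

theorem tendsto_toReal_measure_le_atBot {Ω : Type*} [MeasurableSpace Ω] (μ : Measure Ω)
    [IsProbabilityMeasure μ] {Z : Ω → ℝ} (hZ : Measurable Z) :
    Tendsto (fun t => (μ {ω | Z ω ≤ t}).toReal) atBot (nhds 0) := by
  exact (ProbabilityTheory.tendsto_cdf_atBot (μ.map Z)).congr (cdf_map_apply μ hZ)

theorem upperSemicontinuous_corroboration
    {Ω : Type*} [MeasurableSpace Ω] (μ : Measure Ω) [IsProbabilityMeasure μ]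
    (L U : Ω → ℝ) (hL : Measurable L) (hU : Measurable U) :
    UpperSemicontinuous fun θ => (μ {ω | L ω ≤ θ ∧ θ ≤ U ω}).toReal := by
  intro x y hy
  have hZ : Measurable fun ω => max (L ω - x) (x - U ω) :=
    (hL.sub_const x).max (hU.const_sub x)
  have h0 : ProbabilityTheory.cdf (μ.map fun ω => max (L ω - x) (x - U ω)) 0 < y := by
    rw [cdf_map_apply μ hZ]
    simpa only [max_le_iff, sub_nonpos] using hy
  have hlim : Tendsto (fun θ : ℝ => |θ - x|) (nhds x) (nhdsWithin 0 (Ici 0)) := by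
    refine tendsto_nhdsWithin_iff.2 ⟨?_, Eventually.of_forall fun θ => mem_Ici.2 (abs_nonneg _)⟩
    have : Continuous fun θ : ℝ => |θ - x| := by fun_prop
    simpa using this.tendsto x
  have hrc := (ProbabilityTheory.cdf
    (μ.map fun ω => max (L ω - x) (x - U ω))).right_continuous 0
  filter_upwards [hlim.eventually (hrc.eventually_lt_const h0)] with θ hθ
  refine lt_of_le_of_lt ?_ hθ
  rw [cdf_map_apply μ hZ]
  refine ENNReal.toReal_mono (measure_ne_top _ _) (measure_mono ?_)
  rintro ω ⟨h1, h2⟩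
  have h3 := le_abs_self (θ - x)
  have h4 := neg_abs_le (θ - x)
  have h5 : L ω - x ≤ |θ - x| := by linarith
  have h6 : x - U ω ≤ |θ - x| := by linarith
  exact max_le h5 h6

theorem exists_max_corroboration
    {Ω : Type*} [MeasurableSpace Ω] (μ : Measure Ω) [IsProbabilityMeasure μ]
    (L U : Ω → ℝ) (hL : Measurable L) (hU : Measurable U)
    (hLU : ∀ ω, L ω ≤ U ω)
    (c : ℝ → ℝ) (hc : ∀ θ, c θ = (μ {ω | L ω ≤ θ ∧ θ ≤ U ω}).toReal) :
    ∃ θmax : ℝ, ∀ θ : ℝ, c θ ≤ c θmax := by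
  by_cases hpos : ∃ θ₀, 0 < c θ₀
  · obtain ⟨θ₀, hθ₀⟩ := hpos
    have husc : UpperSemicontinuous c := by
      rw [funext hc]
      exact upperSemicontinuous_corroboration μ L U hL hU
    obtain ⟨a, ha⟩ := eventually_atBot.1
      ((tendsto_toReal_measure_le_atBot μ hL).eventually_lt_const hθ₀)
    obtain ⟨b, hb⟩ := eventually_atBot.1
      ((tendsto_toReal_measure_le_atBot μ hU.neg).eventually_lt_const hθ₀)
    have hlow : ∀ θ ≤ a, c θ < c θ₀ := fun θ hθ => by
      refine lt_of_le_of_lt ?_ (ha θ hθ)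
      rw [hc]
      exact ENNReal.toReal_mono (measure_ne_top _ _) (measure_mono fun ω h => h.1)
    have hhigh : ∀ θ, -b ≤ θ → c θ < c θ₀ := fun θ hθ => by
      refine lt_of_le_of_lt ?_ (hb (-θ) (by linarith))
      rw [hc]
      exact ENNReal.toReal_mono (measure_ne_top _ _)
        (measure_mono fun ω h => neg_le_neg h.2)
    have hmem : θ₀ ∈ Icc a (-b) := by
      constructor
      · by_contra! h
        exact lt_irrefl _ (hlow θ₀ h.le)
      · by_contra! h
        exact lt_irrefl _ (hhigh θ₀ h.le)
    obtain ⟨m, -, hm⟩ := (husc.upperSemicontinuousOn _).exists_isMaxOn ⟨θ₀, hmem⟩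
      (isCompact_Icc (a := a) (b := -b))
    refine ⟨m, fun θ => ?_⟩
    have hm₀ : c θ₀ ≤ c m := hm hmem
    rcases le_total θ a with h | h
    · exact (hlow θ h).le.trans hm₀
    rcases le_total (-b) θ with h' | h'
    · exact (hhigh θ h').le.trans hm₀
    · exact hm ⟨h, h'⟩
  · push Not at hpos
    refine ⟨0, fun θ => (hpos θ).trans ?_⟩
    rw [hc]
    exact ENNReal.toReal_nonneg
end

section
/- If θ is an interior point of the identification region, i.e. L₀ < θ < U₀, then the actual corroboration of θ converges to 1: μ{ω : L_n(ω) ≤ θ ≤ U_n(ω)} → 1 as n → ∞. -/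
/-!
If `[L n ω, U n ω]` misses `θ`, then either `L n ω` deviates from `L₀` by more than `θ - L₀ > 0`,
or `U n ω` deviates from `U₀` by more than `U₀ - θ > 0`. By convergence in probability both
events have measure tending to `0`, so by the union bound the covering probability is squeezed
between `1 - o(1)` and `1`. Subadditivity is applied to a cover of the whole space rather than to
a complement, so no measurability of the events enters.
-/

open MeasureTheory Filter Set

/-- If `θ` is an interior point of the identification region `[L₀, U₀]`, then the
actual corroboration of `θ` converges to 1. -/
theorem corroboration_tendsto_one_of_interior
    {Ω : Type*} [MeasurableSpace Ω] (μ : Measure Ω) [IsProbabilityMeasure μ]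
    (L₀ U₀ : ℝ) (hLU₀ : L₀ < U₀)
    (L U : ℕ → Ω → ℝ) (hL : ∀ n, Measurable (L n)) (hU : ∀ n, Measurable (U n))
    (hLU : ∀ n ω, L n ω ≤ U n ω)
    (hLconv : ∀ ε : ℝ, 0 < ε →
      Tendsto (fun n => μ {ω | ε < |L n ω - L₀|}) atTop (nhds 0))
    (hUconv : ∀ ε : ℝ, 0 < ε →
      Tendsto (fun n => μ {ω | ε < |U n ω - U₀|}) atTop (nhds 0))
    (θ : ℝ) (hθL : L₀ < θ) (hθU : θ < U₀) :
    Tendsto (fun n => μ {ω | L n ω ≤ θ ∧ θ ≤ U n ω}) atTop (nhds 1) := by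
  have herr := ((hLconv (θ - L₀) (sub_pos.2 hθL)).add (hUconv (U₀ - θ) (sub_pos.2 hθU)))
  have hlow := ENNReal.Tendsto.sub tendsto_const_nhds herr (Or.inl ENNReal.one_ne_top)
  rw [add_zero, tsub_zero] at hlow
  refine tendsto_of_tendsto_of_tendsto_of_le_of_le hlow tendsto_const_nhds (fun n => ?_)
    (fun n => prob_le_one)
  -- If `θ` is not covered, then `L n` overshoots `L₀` by more than `θ - L₀`, or `U n`
  -- undershoots `U₀` by more than `U₀ - θ`.
  have hcover : (univ : Set Ω) ⊆ {ω | L n ω ≤ θ ∧ θ ≤ U n ω} ∪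
      ({ω | θ - L₀ < |L n ω - L₀|} ∪ {ω | U₀ - θ < |U n ω - U₀|}) := by
    intro ω _
    rcases lt_or_ge θ (L n ω) with h | h
    · exact Or.inr (Or.inl ((sub_lt_sub_right h L₀).trans_le (le_abs_self _)))
    rcases lt_or_ge (U n ω) θ with h' | h'
    · have hdev : U₀ - θ < -(U n ω - U₀) := by linarith
      exact Or.inr (Or.inr (hdev.trans_le (neg_le_abs _)))
    · exact Or.inl ⟨h, h'⟩
  refine tsub_le_iff_right.2 ?_
  calc (1 : ENNReal) = μ univ := measure_univ.symm
    _ ≤ _ := measure_mono hcover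
    _ ≤ _ := measure_union_le _ _
    _ ≤ _ := by gcongr; exact measure_union_le _ _
end

section
/- The Corroboration Test that rejects the null hypothesis H_A : θ* ∈ (L₀, U₀) whenever θ* lies outside the open interval (L_n, U_n) is strongly Chernoff-consistent: if L₀ < θ* < U₀ then the rejection probability μ{ω : θ* ≤ L_n(ω) or θ* ≥ U_n(ω)} converges to 0, and if θ* < L₀ or θ* > U₀ then this rejection probability converges to 1, as n → ∞. -/
/-! If `L₀ < θ* < U₀`, rejection forces `L n` or `U n` to deviate from its limit by at least the
distance from `θ*` to `L₀` or `U₀`; a union bound makes this improbable. If `θ* < L₀` (resp.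
`U₀ < θ*`), non-rejection forces `L n < θ*` (resp. `θ* < U n`), again an improbable deviation,
so `tendsto_measure_one_of_compl_subset` applies. -/

open MeasureTheory Filter Set

/-- Only `μ univ = μ (A n ∪ E n) ≤ μ (A n) + μ (E n)` is used, so no measurability of `A n` is
needed. -/
lemma tendsto_measure_one_of_compl_subset {Ω : Type*} [MeasurableSpace Ω] (μ : Measure Ω)
    [IsProbabilityMeasure μ] {A E : ℕ → Set Ω} (h : ∀ n, (A n)ᶜ ⊆ E n)
    (hE : Tendsto (fun n => μ (E n)) atTop (nhds 0)) :
    Tendsto (fun n => μ (A n)) atTop (nhds 1) := by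
  have hlow : Tendsto (fun n => 1 - μ (E n)) atTop (nhds 1) := by
    simpa using ENNReal.Tendsto.sub tendsto_const_nhds hE (Or.inl ENNReal.one_ne_top)
  refine tendsto_of_tendsto_of_tendsto_of_le_of_le hlow tendsto_const_nhds
    (fun n => ?_) (fun n => prob_le_one)
  rw [tsub_le_iff_right, ← measure_univ (μ := μ)]
  refine (measure_mono fun ω _ => ?_).trans (measure_union_le (A n) (E n))
  by_cases hω : ω ∈ A n
  · exact Or.inl hω
  · exact Or.inr (h n hω)

/-- The Corroboration Test rejecting `H_A : θ* ∈ (L₀, U₀)` whenever `θ*` falls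
outside the open interval `(L_n, U_n)` is strongly Chernoff-consistent. -/
theorem corroboration_test_chernoff_consistent
    {Ω : Type*} [MeasurableSpace Ω] (μ : Measure Ω) [IsProbabilityMeasure μ]
    (L₀ U₀ : ℝ) (hLU₀ : L₀ < U₀)
    (L U : ℕ → Ω → ℝ) (hL : ∀ n, Measurable (L n)) (hU : ∀ n, Measurable (U n))
    (hLU : ∀ n ω, L n ω ≤ U n ω)
    (hLconv : ∀ ε : ℝ, 0 < ε →
      Tendsto (fun n => μ {ω | ε < |L n ω - L₀|}) atTop (nhds 0))
    (hUconv : ∀ ε : ℝ, 0 < ε →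
      Tendsto (fun n => μ {ω | ε < |U n ω - U₀|}) atTop (nhds 0))
    (θstar : ℝ) :
    ((L₀ < θstar ∧ θstar < U₀) →
      Tendsto (fun n => μ {ω | θstar ≤ L n ω ∨ U n ω ≤ θstar}) atTop (nhds 0)) ∧
    ((θstar < L₀ ∨ U₀ < θstar) →
      Tendsto (fun n => μ {ω | θstar ≤ L n ω ∨ U n ω ≤ θstar}) atTop (nhds 1)) := by
  refine ⟨fun ⟨h1, h2⟩ => ?_, fun h => ?_⟩
  -- Half the distance is used because the deviation events are strict inequalities.
  · have hsum := (hLconv ((θstar - L₀) / 2) (by linarith)).add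
      (hUconv ((U₀ - θstar) / 2) (by linarith))
    rw [add_zero] at hsum
    refine tendsto_of_tendsto_of_tendsto_of_le_of_le tendsto_const_nhds hsum
      (fun n => zero_le) (fun n => (measure_mono ?_).trans (measure_union_le _ _))
    rintro ω (hω | hω)
    · exact Or.inl (by rw [mem_ofPred_eq, lt_abs]; left; linarith)
    · exact Or.inr (by rw [mem_ofPred_eq, lt_abs]; right; linarith)
  · rcases h with h | h
    · refine tendsto_measure_one_of_compl_subset μ (fun n ω hω => ?_)
        (hLconv ((L₀ - θstar) / 2) (by linarith))
      have hlt : L n ω < θstar := not_le.1 fun hle => hω (Or.inl hle)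
      rw [mem_ofPred_eq, lt_abs]; right; linarith
    · refine tendsto_measure_one_of_compl_subset μ (fun n ω hω => ?_)
        (hUconv ((θstar - U₀) / 2) (by linarith))
      have hlt : θstar < U n ω := not_le.1 fun hle => hω (Or.inr hle)
      rw [mem_ofPred_eq, lt_abs]; left; linarith
end

section
/- If n₁₁/n ≤ θ ≤ (n₁₁ + n₊₀)/n, then the profile likelihood satisfies L_p(θ) = (n₁₁/n)^{n₁₁} · (n₀₁/n)^{n₀₁} · (n₊₀/n)^{n₊₀}; in particular L_p is constant over the maximum likelihood region [n₁₁/n, (n₁₁ + n₊₀)/n]. -/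
/-!
The empirical proportions maximise the multinomial likelihood over the whole simplex, and the
hypotheses on `θ` say precisely that they are feasible for the constrained problem; so the
constrained supremum is the unconstrained maximum. Maximality is Gibbs' inequality, obtained factor
by factor from `t ≤ exp (t - 1)`: each factor satisfies `x ^ k ≤ (k / n) ^ k * exp (n * x - k)`
(`pow_le_div_pow_mul_exp`), and on the simplex the three exponents sum to zero.
-/

/-- Multiplicative form of the tangent line bound for `k * log x` at `x = k / n`; it also covers
`k = 0`, where the bound is `1 ≤ exp (n * x)`. -/
theorem pow_le_div_pow_mul_exp (k : ℕ) {n x : ℝ} (hn : 0 < n) (hx : 0 ≤ x) :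
    x ^ k ≤ ((k : ℝ) / n) ^ k * Real.exp (n * x - k) := by
  rcases Nat.eq_zero_or_pos k with rfl | hk
  · simpa using mul_nonneg hn.le hx
  · have hk' : (0 : ℝ) < k := by exact_mod_cast hk
    have h : x ≤ (k : ℝ) / n * Real.exp (n * x / k - 1) := by
      have h1 : n * x / k ≤ Real.exp (n * x / k - 1) := by
        linarith [Real.add_one_le_exp (n * x / k - 1)]
      calc x = (k : ℝ) / n * (n * x / k) := by field_simp
        _ ≤ _ := by gcongr
    calc x ^ k ≤ ((k : ℝ) / n * Real.exp (n * x / k - 1)) ^ k := by gcongr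
      _ = _ := by
        rw [mul_pow, ← Real.exp_nat_mul]
        congr 2
        field_simp

/-- On the maximum likelihood region `[n₁₁/n, (n₁₁+n₊₀)/n]` the profile likelihood
is constant, equal to the likelihood evaluated at the empirical proportions. -/
theorem profile_likelihood_flat_region
    (n11 n01 np0 : ℕ) (n : ℕ) (hn : n = n11 + n01 + np0) (hnpos : 0 < n)
    (θ : ℝ) (hθ₁ : (n11 : ℝ) / n ≤ θ) (hθ₂ : θ ≤ ((n11 : ℝ) + np0) / n) :
    sSup {x : ℝ | ∃ a b c : ℝ, 0 ≤ a ∧ 0 ≤ b ∧ 0 ≤ c ∧ a + b + c = 1 ∧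
        a ≤ θ ∧ θ ≤ a + c ∧ x = a ^ n11 * b ^ n01 * c ^ np0} =
      ((n11 : ℝ) / n) ^ n11 * ((n01 : ℝ) / n) ^ n01 * ((np0 : ℝ) / n) ^ np0 := by
  have hn0 : (0 : ℝ) < n := by exact_mod_cast hnpos
  have hsum : (n : ℝ) = n11 + n01 + np0 := by exact_mod_cast hn
  refine IsGreatest.csSup_eq ⟨⟨n11 / n, n01 / n, np0 / n, by positivity, by positivity,
    by positivity, ?_, hθ₁, ?_, rfl⟩, ?_⟩
  · rw [← add_div, ← add_div, ← hsum, div_self hn0.ne']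
  · rwa [← add_div]
  · rintro x ⟨a, b, c, ha, hb, hc, habc, -, -, rfl⟩
    have hexp : Real.exp (n * a - n11) * Real.exp (n * b - n01) * Real.exp (n * c - np0) = 1 := by
      rw [← Real.exp_add, ← Real.exp_add, Real.exp_eq_one_iff]
      linear_combination (n : ℝ) * habc + hsum
    calc a ^ n11 * b ^ n01 * c ^ np0
        ≤ (((n11 : ℝ) / n) ^ n11 * Real.exp (n * a - n11)) *
          (((n01 : ℝ) / n) ^ n01 * Real.exp (n * b - n01)) *
          (((np0 : ℝ) / n) ^ np0 * Real.exp (n * c - np0)) := by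
          gcongr <;> exact pow_le_div_pow_mul_exp _ hn0 ‹_›
      _ = _ := by
          linear_combination ((n11 : ℝ) / n) ^ n11 * ((n01 : ℝ) / n) ^ n01 *
            ((np0 : ℝ) / n) ^ np0 * hexp
end

section
/- If 0 ≤ θ < n₁₁/n and n₀₁ + n₊₀ ≥ 1, then the profile likelihood satisfies L_p(θ) = θ^{n₁₁} · ((1 − θ) n₀₁ / (n₀₁ + n₊₀))^{n₀₁} · ((1 − θ) n₊₀ / (n₀₁ + n₊₀))^{n₊₀}. -/
/-!
The value on the right is attained at `a = θ`, with the remaining mass `1 - θ` split between `b` and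
`c` in proportion to `n01 : np0`. For the upper bound, the tangent-line inequality `t ≤ exp (t - 1)`
gives `x ^ k ≤ (k / s) ^ k * exp (s * x - k)` for every slope `s > 0`. With `m = n01 + np0`, use the
slope `n11 / θ` for `a` and the common slope `m / (1 - θ)` for `b` and `c`, so that the factors
`k / s` are the coordinates of the claimed maximizer. Multiplying, the total exponent is
`(a - θ) * (n11 / θ - m / (1 - θ))`, which is nonpositive because `a ≤ θ ≤ n11 / n`.
The case `θ = 0` is separate: both sides vanish, since `n11 > 0`.
-/

/-- The tangent-line bound for `k * log x` at `x = k / s`, exponentiated. -/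
lemma pow_le_tangent (k : ℕ) {s x : ℝ} (hs : 0 < s) (hx : 0 ≤ x) :
    x ^ k ≤ ((k : ℝ) / s) ^ k * Real.exp (s * x - k) := by
  rcases Nat.eq_zero_or_pos k with rfl | hk
  · simpa using mul_nonneg hs.le hx
  · have hk' : (0 : ℝ) < k := by exact_mod_cast hk
    have h1 : x ≤ (k / s) * Real.exp (s * x / k - 1) := by
      have h := Real.add_one_le_exp (s * x / k - 1)
      calc x = (k / s) * (s * x / k - 1 + 1) := by field_simp; ring
        _ ≤ _ := by gcongr
    calc x ^ k ≤ ((k / s) * Real.exp (s * x / k - 1)) ^ k := by gcongr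
      _ = _ := by
        rw [mul_pow, ← Real.exp_nat_mul]
        congr 2
        field_simp

/-- For `θ` below the maximum likelihood region, the profile likelihood equals
`θ^{n₁₁} ((1-θ) n₀₁/(n₀₁+n₊₀))^{n₀₁} ((1-θ) n₊₀/(n₀₁+n₊₀))^{n₊₀}`. -/
theorem profile_likelihood_left_branch
    (n11 n01 np0 : ℕ) (n : ℕ) (hn : n = n11 + n01 + np0) (hnpos : 0 < n)
    (hdenom : 1 ≤ n01 + np0)
    (θ : ℝ) (hθ₀ : 0 ≤ θ) (hθ : θ < (n11 : ℝ) / n) :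
    sSup {x : ℝ | ∃ a b c : ℝ, 0 ≤ a ∧ 0 ≤ b ∧ 0 ≤ c ∧ a + b + c = 1 ∧
        a ≤ θ ∧ θ ≤ a + c ∧ x = a ^ n11 * b ^ n01 * c ^ np0} =
      θ ^ n11 * ((1 - θ) * n01 / ((n01 : ℝ) + np0)) ^ n01 *
        ((1 - θ) * np0 / ((n01 : ℝ) + np0)) ^ np0 := by
  have hnR : (0 : ℝ) < n := by exact_mod_cast hnpos
  have hnc : (n : ℝ) = n11 + n01 + np0 := by exact_mod_cast hn
  have hm : (0 : ℝ) < (n01 : ℝ) + np0 := by exact_mod_cast hdenom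
  have hθn : θ * n < n11 := (lt_div_iff₀ hnR).1 hθ
  have hn11 : (0 : ℝ) < n11 := lt_of_le_of_lt (by positivity) hθn
  have hθ1 : 0 < 1 - θ := by
    by_contra! h
    nlinarith
  refine IsGreatest.csSup_eq ⟨?_, ?_⟩
  · have hc : 0 ≤ (1 - θ) * np0 / ((n01 : ℝ) + np0) := by positivity
    refine ⟨θ, _, _, hθ₀, by positivity, hc, ?_, le_rfl, by linarith, rfl⟩
    field_simp
    ring
  · rintro _ ⟨a, b, c, ha, hb, hc, habc, haθ, -, rfl⟩
    rcases hθ₀.eq_or_lt with rfl | hθpos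
    · have h0 : n11 ≠ 0 := by
        rintro rfl
        simp at hn11
      simp [le_antisymm haθ ha, h0]
    · have hs : 0 < ((n01 : ℝ) + np0) / (1 - θ) := by positivity
      have h1 := pow_le_tangent n11 (div_pos hn11 hθpos) ha
      have h2 := pow_le_tangent n01 hs hb
      have h3 := pow_le_tangent np0 hs hc
      have e1 : (n11 : ℝ) / (n11 / θ) = θ := by field_simp
      have e2 (k : ℝ) : k / (((n01 : ℝ) + np0) / (1 - θ)) = (1 - θ) * k / ((n01 : ℝ) + np0) := by
        field_simp
      rw [e1] at h1
      rw [e2] at h2 h3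
      have hexp : (n11 / θ * a - n11) + (((n01 : ℝ) + np0) / (1 - θ) * b - n01)
          + (((n01 : ℝ) + np0) / (1 - θ) * c - np0) ≤ 0 := by
        have hbc : c = 1 - a - b := by linarith
        have hslope : ((n01 : ℝ) + np0) / (1 - θ) ≤ n11 / θ := by
          rw [div_le_div_iff₀ hθ1 hθpos]
          rw [hnc] at hθn
          linarith
        calc _ = (a - θ) * (n11 / θ - ((n01 : ℝ) + np0) / (1 - θ)) := by
              rw [hbc]
              field_simp
              ring
          _ ≤ 0 := mul_nonpos_of_nonpos_of_nonneg (by linarith) (by linarith)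
      calc a ^ n11 * b ^ n01 * c ^ np0 ≤ _ :=
            mul_le_mul (mul_le_mul h1 h2 (by positivity) (by positivity)) h3
              (by positivity) (by positivity)
        _ = (θ ^ n11 * ((1 - θ) * n01 / ((n01 : ℝ) + np0)) ^ n01 *
              ((1 - θ) * np0 / ((n01 : ℝ) + np0)) ^ np0) *
            Real.exp ((n11 / θ * a - n11) + (((n01 : ℝ) + np0) / (1 - θ) * b - n01)
              + (((n01 : ℝ) + np0) / (1 - θ) * c - np0)) := by
            rw [Real.exp_add, Real.exp_add]
            ring
        _ ≤ _ := mul_le_of_le_one_right (by positivity) (Real.exp_le_one_iff.2 hexp)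
end

section
/- If (n₁₁ + n₊₀)/n < θ ≤ 1 and n₁₁ + n₊₀ ≥ 1, then the profile likelihood satisfies L_p(θ) = (θ n₁₁ / (n₁₁ + n₊₀))^{n₁₁} · (1 − θ)^{n₀₁} · (θ n₊₀ / (n₁₁ + n₊₀))^{n₊₀}. -/
/-!
The value on the right is the likelihood at `p = (θ n₁₁/m, 1 - θ, θ n₊₀/m)`, where `m = n₁₁ + n₊₀`,
the maximizer of the likelihood on the segment `λ₁₁ + λ₊₀ = θ` of the simplex. It dominates every feasible
`(a, b, c)` by concavity of the logarithm: bounding each factor by its tangent at `p`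
(`pow_le_pow_mul_exp`, a form of `x + 1 ≤ exp x`) gives
`ℓ(a, b, c) ≤ ℓ(p) * exp ((a + c - θ) * (m / θ - n₀₁ / (1 - θ)))`. The exponent is nonpositive, since
`θ ≤ a + c` while `m / n < θ` makes the second factor negative. For `θ = 1` feasibility forces `b = 0`, and both sides vanish since
`m / n < 1` means `n₀₁ > 0`.
-/

/-- The tangent bound `k log x ≤ k log p + k (x - p) / p` in multiplicative form. The slope `k / p` is
given as a number `t` with `t * p = k`, so that `k = 0` (and then possibly `p = 0`) is covered. -/
theorem pow_le_pow_mul_exp (k : ℕ) (x p t : ℝ) (hx : 0 ≤ x) (ht : 0 ≤ t) (h : t * p = k) :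
    x ^ k ≤ p ^ k * Real.exp (t * x - k) := by
  rcases Nat.eq_zero_or_pos k with rfl | hk
  · simpa using mul_nonneg ht hx
  have hk' : (0 : ℝ) < k := by exact_mod_cast hk
  have hp : 0 < p := by
    by_contra! hp
    nlinarith [mul_nonneg ht (neg_nonneg.mpr hp)]
  have h1 : x ≤ p * Real.exp (x / p - 1) := by
    have h2 := Real.add_one_le_exp (x / p - 1)
    calc x = p * (x / p - 1 + 1) := by field_simp; ring
      _ ≤ _ := by gcongr
  have h3 : t * x - k = k * (x / p - 1) := by
    rw [← h]; field_simp
  calc x ^ k ≤ (p * Real.exp (x / p - 1)) ^ k := by gcongr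
    _ = _ := by rw [mul_pow, ← Real.exp_nat_mul, h3]

/-- For `θ` above the maximum likelihood region, the profile likelihood equals
`(θ n₁₁/(n₁₁+n₊₀))^{n₁₁} (1-θ)^{n₀₁} (θ n₊₀/(n₁₁+n₊₀))^{n₊₀}`. -/
theorem profile_likelihood_right_branch
    (n11 n01 np0 : ℕ) (n : ℕ) (hn : n = n11 + n01 + np0) (hnpos : 0 < n)
    (hdenom : 1 ≤ n11 + np0)
    (θ : ℝ) (hθ : ((n11 : ℝ) + np0) / n < θ) (hθ₁ : θ ≤ 1) :
    sSup {x : ℝ | ∃ a b c : ℝ, 0 ≤ a ∧ 0 ≤ b ∧ 0 ≤ c ∧ a + b + c = 1 ∧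
        a ≤ θ ∧ θ ≤ a + c ∧ x = a ^ n11 * b ^ n01 * c ^ np0} =
      (θ * n11 / ((n11 : ℝ) + np0)) ^ n11 * (1 - θ) ^ n01 *
        (θ * np0 / ((n11 : ℝ) + np0)) ^ np0 := by
  have hm : (0 : ℝ) < (n11 : ℝ) + np0 := by exact_mod_cast hdenom
  have hn0 : (0 : ℝ) < n := by exact_mod_cast hnpos
  have hnR : (n : ℝ) = n11 + n01 + np0 := by exact_mod_cast hn
  have hθ0 : 0 < θ := lt_of_le_of_lt (by positivity) hθ
  rw [div_lt_iff₀ hn0, hnR] at hθ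
  have hsum : θ * n11 / ((n11 : ℝ) + np0) + θ * np0 / ((n11 : ℝ) + np0) = θ := by
    field_simp
  set p := θ * n11 / ((n11 : ℝ) + np0) with hp
  set r := θ * np0 / ((n11 : ℝ) + np0) with hr
  have hp0 : 0 ≤ p := by positivity
  have hr0 : 0 ≤ r := by positivity
  apply IsGreatest.csSup_eq
  refine ⟨⟨p, 1 - θ, r, hp0, by linarith, hr0, by linarith, by linarith, hsum.ge, rfl⟩, ?_⟩
  rintro _ ⟨a, b, c, ha, hb, hc, habc, -, hac, rfl⟩
  have hn01 : n01 ≠ 0 := by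
    rintro rfl
    push_cast at hθ
    nlinarith
  rcases hθ₁.eq_or_lt with h1 | h1
  · have hb0 : b = 0 := by linarith
    simp [hb0, h1, hn01]
  have hq : 0 < 1 - θ := by linarith
  have ht : 0 ≤ ((n11 : ℝ) + np0) / θ := by positivity
  have hA := pow_le_pow_mul_exp n11 a p _ ha ht (by rw [hp]; field_simp)
  have hC := pow_le_pow_mul_exp np0 c r _ hc ht (by rw [hr]; field_simp)
  have hB := pow_le_pow_mul_exp n01 b (1 - θ) (n01 / (1 - θ)) hb (by positivity) (by field_simp)
  have hslope : ((n11 : ℝ) + np0) / θ ≤ n01 / (1 - θ) := by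
    rw [div_le_div_iff₀ hθ0 hq]
    linarith
  have hexp : (((n11 : ℝ) + np0) / θ * a - n11) + (n01 / (1 - θ) * b - n01)
      + (((n11 : ℝ) + np0) / θ * c - np0) ≤ 0 := by
    have e1 : ((n11 : ℝ) + np0) / θ * θ = n11 + np0 := by field_simp
    have e2 : (n01 : ℝ) / (1 - θ) * (1 - θ) = n01 := by field_simp
    have hb' : b = 1 - a - c := by linarith
    subst hb'
    nlinarith [mul_nonneg (sub_nonneg.mpr hac) (sub_nonneg.mpr hslope)]
  calc a ^ n11 * b ^ n01 * c ^ np0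
      ≤ (p ^ n11 * Real.exp (((n11 : ℝ) + np0) / θ * a - n11))
        * ((1 - θ) ^ n01 * Real.exp (n01 / (1 - θ) * b - n01))
        * (r ^ np0 * Real.exp (((n11 : ℝ) + np0) / θ * c - np0)) := by gcongr
    _ = p ^ n11 * (1 - θ) ^ n01 * r ^ np0
        * Real.exp ((((n11 : ℝ) + np0) / θ * a - n11) + (n01 / (1 - θ) * b - n01)
          + (((n11 : ℝ) + np0) / θ * c - np0)) := by
      rw [Real.exp_add, Real.exp_add]; ring
    _ ≤ p ^ n11 * (1 - θ) ^ n01 * r ^ np0 :=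
      mul_le_of_le_one_right (by positivity) (Real.exp_le_one_iff.mpr hexp)
end

section
/- Let p be a real number with 0 < p < 1. Then the probability that a Binomial(n, p) random variable is at most n·p converges to 1/2 as n → ∞: ∑_{k = 0}^{⌊n p⌋} C(n, k) p^k (1 − p)^{n − k} → 1/2. Consequently, in the missing data setting the asymptotic actual corroboration of the lower bound L₀ = λ₁₁⁰ of the identification region equals 0.5 when 0 < λ₁₁⁰ < 1. -/
open Filter

/-!
The statement is the central limit theorem read off at the mean. The standardized binomial law
(`stdBinomial`) has as characteristic function the `n`-th power of that of a standardized Bernoulli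
variable (`charFun_stdBinomial`, which is the binomial theorem), so Mathlib's Taylor estimate for
such powers and Lévy's continuity theorem give weak convergence to the standard Gaussian
(`tendsto_stdBinomial`). The binomial distribution function at `n * p` is the mass that the
standardized law gives to `(-∞, 0]` (`stdBinomial_real_Iic_zero`); the Gaussian has no atom at `0`,
so these masses converge to the Gaussian mass of `(-∞, 0]`, which is `1 / 2` by symmetry.
-/

open MeasureTheory ProbabilityTheory
open scoped unitInterval

/-- The map standardizing a Bernoulli(`p`) variable to mean `0` and variance `1`. -/
noncomputable def stdize (p : ℝ) (x : ℝ) : ℝ := (x - p) / √(p * (1 - p))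

/-- The law of `(√n)⁻¹ * (K - n * p) / √(p * (1 - p))` for `K` with law Binomial(`n`, `p`).
The factor `√n` is kept apart to match the scaling in the central limit theorem. -/
noncomputable def stdBinomial (n : ℕ) (p : I) : Measure ℝ :=
  (binomial n p).map fun k : ℕ ↦ (√n)⁻¹ * ((k - n * p) / √((p : ℝ) * (1 - p)))

instance (n : ℕ) (p : I) : IsProbabilityMeasure (stdBinomial n p) :=
  Measure.isProbabilityMeasure_map (by fun_prop)

lemma charFun_stdBinomial (n : ℕ) (p : I) (t : ℝ) :
    charFun (stdBinomial n p) t =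
      (charFun ((bernoulliMeasure (1 : ℝ) 0 p).map (stdize p)) ((√n)⁻¹ * t)) ^ n := by
  rw [map_bernoulliMeasure, charFun_apply_real, charFun_apply_real, stdBinomial,
    integral_map (by fun_prop) (by fun_prop), integral_binomial, integral_bernoulliMeasure, add_pow,
    ← Nat.range_succ_eq_Iic]
  refine Finset.sum_congr rfl fun k hk ↦ ?_
  have hk : k ≤ n := by simpa [Nat.lt_succ_iff] using hk
  simp only [Complex.real_smul, mul_pow, ← Complex.exp_nat_mul, stdize]
  -- `k` standardized successes and `n - k` standardized failures sum to `k - n * p`,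
  -- up to the common scaling.
  have : Complex.exp (t * ((√n)⁻¹ * ((k - n * p) / √((p : ℝ) * (1 - p))) : ℝ) * Complex.I) =
      Complex.exp (k * (((√n)⁻¹ * t : ℝ) * ((1 - p) / √((p : ℝ) * (1 - p)) : ℝ) * Complex.I)) *
      Complex.exp ((n - k : ℕ) *
        (((√n)⁻¹ * t : ℝ) * ((0 - p) / √((p : ℝ) * (1 - p)) : ℝ) * Complex.I)) := by
    rw [← Complex.exp_add]
    congr 1
    push_cast [hk]
    ring
  rw [this]
  push_cast
  ring

lemma tendsto_stdBinomial (p : I) (hp₀ : 0 < (p : ℝ)) (hp₁ : (p : ℝ) < 1) :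
    Tendsto (β := ProbabilityMeasure ℝ) (fun n ↦ ⟨stdBinomial n p, inferInstance⟩) atTop
      (nhds ⟨gaussianReal 0 1, inferInstance⟩) := by
  refine ProbabilityMeasure.tendsto_iff_tendsto_charFun.2 fun t ↦ ?_
  have hv : 0 < (p : ℝ) * (1 - p) := mul_pos hp₀ (by linarith)
  have h := tendsto_charFun_inv_sqrt_mul_pow (P := bernoulliMeasure (1 : ℝ) 0 p)
    (X := stdize p) (by unfold stdize; fun_prop) ?_ ?_ t
  · simpa [charFun_stdBinomial, charFun_gaussianReal, neg_div] using h
  · rw [integral_bernoulliMeasure]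
    simp only [stdize, smul_eq_mul]
    ring
  · rw [integral_bernoulliMeasure]
    simp only [stdize, smul_eq_mul, Pi.pow_apply, div_pow, Real.sq_sqrt hv.le]
    have : (1 : ℝ) - p ≠ 0 := by linarith
    field_simp
    ring

lemma stdBinomial_real_Iic_zero (n : ℕ) (hn : 0 < n) (p : I) (hp₀ : 0 < (p : ℝ))
    (hp₁ : (p : ℝ) < 1) :
    (stdBinomial n p).real (Set.Iic 0) =
      ∑ k ∈ Finset.range (⌊(n : ℝ) * p⌋₊ + 1),
        (n.choose k : ℝ) * (p : ℝ) ^ k * (1 - p) ^ (n - k) := by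
  rw [stdBinomial, map_measureReal_apply (by fun_prop) measurableSet_Iic]
  simp_rw [← binomial_real_singleton, sum_measureReal_singleton]
  congr 1
  ext k
  have hv : 0 < √((p : ℝ) * (1 - p)) := Real.sqrt_pos.2 (mul_pos hp₀ (by linarith))
  have hs : 0 < (√(n : ℝ))⁻¹ := by positivity
  simp only [Set.mem_preimage, Set.mem_Iic, Finset.coe_range, Set.mem_Iio, Nat.lt_succ_iff]
  rw [Nat.le_floor_iff (by positivity), ← not_lt, mul_pos_iff_of_pos_left hs,
    div_pos_iff_of_pos_right hv, not_lt, sub_nonpos]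

lemma gaussianReal_real_Iic_zero : (gaussianReal 0 1).real (Set.Iic 0) = 1 / 2 := by
  have : NullSingletonClass (gaussianReal 0 1) := nullSingletonClass_gaussianReal one_ne_zero
  have h_symm : (gaussianReal 0 1).real (Set.Iic 0) = (gaussianReal 0 1).real (Set.Ioi 0) := by
    have h := gaussianReal_map_neg (μ := 0) (v := 1)
    rw [neg_zero] at h
    have h_pre : (fun x : ℝ ↦ -x) ⁻¹' Set.Iic 0 = Set.Ici 0 := by ext; simp
    conv_lhs => rw [← h, map_measureReal_apply (by fun_prop) measurableSet_Iic, h_pre]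
    exact measureReal_congr Ioi_ae_eq_Ici.symm
  have h_compl := probReal_add_probReal_compl (μ := gaussianReal 0 1) (measurableSet_Iic (a := 0))
  rw [Set.compl_Iic, ← h_symm] at h_compl
  linarith

/-- The Binomial(n, p) CDF evaluated at `n·p` tends to `1/2`: the probability that
a Binomial(n, p) variable is at most `n·p` converges to `1/2` as `n → ∞`. Hence in
the missing data setting the asymptotic corroboration of the lower identification
bound `L₀ = λ₁₁⁰ ∈ (0,1)` equals `0.5`. -/
theorem binomial_cdf_at_mean_tendsto_half (p : ℝ) (hp₀ : 0 < p) (hp₁ : p < 1) :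
    Tendsto (fun n : ℕ =>
        ∑ k ∈ Finset.range (⌊(n : ℝ) * p⌋₊ + 1),
          (n.choose k : ℝ) * p ^ k * (1 - p) ^ (n - k))
      atTop (nhds (1 / 2)) := by
  have : NullSingletonClass (gaussianReal 0 1) := nullSingletonClass_gaussianReal one_ne_zero
  lift p to I using ⟨hp₀.le, hp₁.le⟩
  have h := ProbabilityMeasure.tendsto_measure_of_null_frontier_of_tendsto'
    (tendsto_stdBinomial p hp₀ hp₁) (E := Set.Iic 0) (by simp)
  have h' := (ENNReal.tendsto_toReal (measure_ne_top (gaussianReal 0 1) _)).comp h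
  rw [← gaussianReal_real_Iic_zero]
  refine h'.congr' ?_
  filter_upwards [eventually_gt_atTop 0] with n hn
  exact stdBinomial_real_Iic_zero n hn p hp₀ hp₁
end
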